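/- Let A be a finite-dimensional Lie algebra over a field F of dimension d ≥ 2, regarded as a non-unital F-algebra whose multiplication is the Lie bracket. Then l(A) ≤ d − 1. -/

import Mathlib

/-!
Framework: length of finite-dimensional not necessarily associative,
not necessarily unital algebras (non-unital convention: `L_0(S) = 0`).
The multiplication of the algebra is passed explicitly as a binary
operation `μ`, so that the same definitions apply to an algebra, to its
commutator algebra, to a Lie bracket, etc.
-/

open Submodule Module

/-- `IsWord μ S k w`: `w` is a product of `k` elements of `S` (with respect to the
multiplication `μ`) with some placement of parentheses. -/
inductive IsWord {A : Type*} (μ : A → A → A) (S : Set A) : ℕ → A → Prop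
  | base {a : A} (ha : a ∈ S) : IsWord μ S 1 a
  | mul {m n : ℕ} {a b : A} (ha : IsWord μ S m a) (hb : IsWord μ S n b) :
      IsWord μ S (m + n) (μ a b)

/-- The multiplication of an algebra, as a plain binary operation. -/
def amul (A : Type*) [Mul A] : A → A → A := fun a b => a * b

section
variable (F : Type*) {A : Type*} [Field F] [AddCommGroup A] [Module F A]

/-- `L_i(S)`: the linear span of all words in `S` of length at most `i`
(non-unital convention, so `L_0(S) = 0`). -/
def Lset (μ : A → A → A) (S : Set A) (i : ℕ) : Submodule F A :=
  Submodule.span F {a | ∃ k, k ≤ i ∧ IsWord μ S k a}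

/-- `S` generates the algebra, i.e. the span of all words in `S` is everything. -/
def Generates (μ : A → A → A) (S : Set A) : Prop :=
  Submodule.span F {a | ∃ k, IsWord μ S k a} = ⊤

/-- `l(S)`: the length of a generating set `S`, the least `k` with `L_k(S) = A`. -/
noncomputable def lenSet (μ : A → A → A) (S : Set A) : ℕ :=
  sInf {k | Lset F μ S k = ⊤}

/-- An irreducible word of length `k` in `S`. -/
def IrredWord (μ : A → A → A) (S : Set A) (k : ℕ) (w : A) : Prop :=
  IsWord μ S k w ∧ ∀ m, m < k → w ∉ Lset F μ S m

end

section
variable {A : Type*}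

/-- The set `P(x,y,z)` of monomials. -/
def Pset (μ : A → A → A) (x y z : A) : Set A :=
  {μ (μ x z) y, μ (μ z x) y, μ (μ y z) x, μ (μ z y) x,
   μ x (μ z y), μ x (μ y z), μ y (μ x z), μ y (μ z x),
   μ x y, μ y x, μ x z, μ z x, μ y z, μ z y, x, y, z}

/-- The set `Q_l(x,y,z)` of monomials. -/
def Qlset (μ : A → A → A) (x y z : A) : Set A :=
  {μ x (μ z y), μ x (μ y z), μ y (μ x z), μ y (μ z x),
   μ x y, μ y x, μ x z, μ z x, μ y z, μ z y, x, y, z}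

/-- The set `Q_r(x,y,z)` of monomials. -/
def Qrset (μ : A → A → A) (x y z : A) : Set A :=
  {μ (μ x z) y, μ (μ z x) y, μ (μ y z) x, μ (μ z y) x,
   μ x y, μ y x, μ x z, μ z x, μ y z, μ z y, x, y, z}

end

section
variable (F : Type*) {A : Type*} [Field F] [AddCommGroup A] [Module F A]

/-- A mixing algebra: `(xy)z` and `z(xy)` lie in the span of `P(x,y,z)`. -/
def IsMixing (μ : A → A → A) : Prop :=
  ∀ x y z : A, μ (μ x y) z ∈ Submodule.span F (Pset μ x y z) ∧
    μ z (μ x y) ∈ Submodule.span F (Pset μ x y z)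

/-- A sliding algebra: either `z(xy)` always lies in the span of `Q_r(x,y,z)`, or
`(xy)z` always lies in the span of `Q_l(x,y,z)`. -/
def IsSliding (μ : A → A → A) : Prop :=
  (∀ x y z : A, μ z (μ x y) ∈ Submodule.span F (Qrset μ x y z)) ∨
  (∀ x y z : A, μ (μ x y) z ∈ Submodule.span F (Qlset μ x y z))

end

section LieLength

variable {F L : Type*} [Field F] [LieRing L] [LieAlgebra F L]

/-- If the operators `⁅s, ·⁆`, `s ∈ S`, preserve a subspace, so does `⁅w, ·⁆` for every word `w`. -/
lemma IsWord.lie_mem {S : Set L} {p : Submodule F L}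
    (hS : ∀ s ∈ S, ∀ x ∈ p, ⁅s, x⁆ ∈ p) {k : ℕ} {w : L}
    (hw : IsWord (fun x y : L => ⁅x, y⁆) S k w) : ∀ x ∈ p, ⁅w, x⁆ ∈ p := by
  induction hw with
  | base ha => exact hS _ ha
  | mul _ _ iha ihb =>
    intro x hx
    rw [lie_lie]
    exact p.sub_mem (iha _ (ihb _ hx)) (ihb _ (iha _ hx))

lemma IsWord.mem_of_lie_mem {S : Set L} {p : Submodule F L} (hSp : S ⊆ p)
    (hS : ∀ s ∈ S, ∀ x ∈ p, ⁅s, x⁆ ∈ p) {k : ℕ} {w : L}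
    (hw : IsWord (fun x y : L => ⁅x, y⁆) S k w) : w ∈ p := by
  induction hw with
  | base ha => exact hSp ha
  | mul ha _ _ ihb => exact ha.lie_mem hS _ ihb

/-- A subspace containing a generating set `S` and preserved by each `⁅s, ·⁆`, `s ∈ S`,
is everything. -/
lemma Generates.eq_top_of_lie_mem {S : Set L} (hgen : Generates F (fun x y : L => ⁅x, y⁆) S)
    {p : Submodule F L} (hSp : S ⊆ p) (hS : ∀ s ∈ S, ∀ x ∈ p, ⁅s, x⁆ ∈ p) : p = ⊤ := by
  rw [eq_top_iff, ← hgen, Submodule.span_le]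
  rintro w ⟨k, hw⟩
  exact hw.mem_of_lie_mem hSp hS

lemma Lset_mono {A : Type*} [AddCommGroup A] [Module F A] (μ : A → A → A) (S : Set A) :
    Monotone (Lset F μ S) :=
  fun _ _ h => Submodule.span_mono fun _ ⟨k, hk, hw⟩ => ⟨k, hk.trans h, hw⟩

lemma subset_Lset {A : Type*} [AddCommGroup A] [Module F A] (μ : A → A → A) (S : Set A)
    {k : ℕ} (hk : 1 ≤ k) : S ⊆ Lset F μ S k :=
  fun _ hs => Submodule.subset_span ⟨1, hk, .base hs⟩

lemma lie_mem_Lset_succ {S : Set L} {s x : L} (hs : s ∈ S) {k : ℕ}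
    (hx : x ∈ Lset F (fun x y : L => ⁅x, y⁆) S k) :
    ⁅s, x⁆ ∈ Lset F (fun x y : L => ⁅x, y⁆) S (k + 1) := by
  induction hx using Submodule.span_induction with
  | mem w hw =>
    obtain ⟨m, hm, hw⟩ := hw
    exact Submodule.subset_span ⟨1 + m, by omega, .mul (.base hs) hw⟩
  | zero => simp
  | add x y _ _ hx hy => rw [lie_add]; exact add_mem hx hy
  | smul c x _ hx => rw [lie_smul]; exact Submodule.smul_mem _ c hx

/-- The filtration `L_k(S)`, `k ≥ 1`, is strictly increasing until it reaches the whole algebra. -/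
lemma Generates.Lset_lt_succ {S : Set L} (hgen : Generates F (fun x y : L => ⁅x, y⁆) S)
    {k : ℕ} (hk : 1 ≤ k) (hne : Lset F (fun x y : L => ⁅x, y⁆) S k ≠ ⊤) :
    Lset F (fun x y : L => ⁅x, y⁆) S k < Lset F (fun x y : L => ⁅x, y⁆) S (k + 1) := by
  refine lt_of_le_of_ne (Lset_mono _ S k.le_succ) fun heq => hne ?_
  refine hgen.eq_top_of_lie_mem (subset_Lset _ S hk) fun s hs x hx => ?_
  rw [heq]
  exact lie_mem_Lset_succ hs hx

lemma lie_eq_zero_of_finrank_le_one {p : Submodule F L} [FiniteDimensional F p]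
    (hp : finrank F p ≤ 1) {x y : L} (hx : x ∈ p) (hy : y ∈ p) : ⁅x, y⁆ = 0 := by
  obtain ⟨v, hv⟩ := finrank_le_one_iff.mp hp
  obtain ⟨a, ha⟩ := hv ⟨x, hx⟩
  obtain ⟨b, hb⟩ := hv ⟨y, hy⟩
  have hax : a • (v : L) = x := congrArg Subtype.val ha
  have hby : b • (v : L) = y := congrArg Subtype.val hb
  simp [← hax, ← hby]

lemma Generates.succ_le_finrank_Lset [FiniteDimensional F L] {S : Set L}
    (hgen : Generates F (fun x y : L => ⁅x, y⁆) S) {k : ℕ} (hk : 1 ≤ k)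
    (hne : Lset F (fun x y : L => ⁅x, y⁆) S k ≠ ⊤) :
    k + 1 ≤ finrank F (Lset F (fun x y : L => ⁅x, y⁆) S k) := by
  induction k, hk using Nat.le_induction with
  | base =>
    by_contra! hlt
    refine hne (hgen.eq_top_of_lie_mem (subset_Lset _ S le_rfl) fun s hs x hx => ?_)
    rw [lie_eq_zero_of_finrank_le_one (Nat.le_of_lt_succ hlt) (subset_Lset _ S le_rfl hs) hx]
    exact zero_mem _
  | succ k hk ih =>
    have hne' : Lset F (fun x y : L => ⁅x, y⁆) S k ≠ ⊤ := fun h =>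
      hne (top_le_iff.mp (h ▸ Lset_mono _ S k.le_succ))
    exact (ih hne').trans_lt (Submodule.finrank_lt_finrank_of_lt (hgen.Lset_lt_succ hk hne'))

end LieLength

/-- a finite-dimensional Lie algebra of dimension `d ≥ 2`, viewed as a
non-unital algebra whose multiplication is the bracket, has length at most `d − 1`. -/
theorem lie_length_le_dim_sub_one
    {F L : Type*} [Field F] [LieRing L] [LieAlgebra F L] [FiniteDimensional F L]
    (hdim : 2 ≤ finrank F L) :
    ∀ S : Set L, S.Finite → Generates F (fun x y : L => ⁅x, y⁆) S →
      lenSet F (fun x y : L => ⁅x, y⁆) S ≤ finrank F L - 1 := by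
  intro S _ hgen
  refine Nat.sInf_le ?_
  by_contra hne
  have hle := hgen.succ_le_finrank_Lset (by omega) hne
  have hlt := Submodule.finrank_lt hne
  omega
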